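/- There exists C > 0, depending on Γ_D but independent of how the mesh intersects the boundary, such that for every element K ∈ M_{0,h} and every v_h ∈ Ṽ_h, ‖∂v_h/∂n‖_{L²(Γ_K)} ≤ C ‖h^{−1/2} ∇v_h‖_{L²(K)}, where Γ_K = Γ_D ∩ cl(K) and ∂v_h/∂n is the normal derivative on Γ_D. -/

import Mathlib

open Set Metric MeasureTheory
open scoped InnerProductSpace NNReal ENNReal

noncomputable section

/-- Euclidean space `ℝᵈ`. -/
abbrev Euc (d : ℕ) : Type := EuclideanSpace ℝ (Fin d)

/-- The open parametric unit cube `(0,1)ᵈ`. -/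
def unitCube (d : ℕ) : Set (Euc d) := {x : Euc d | ∀ i, x i ∈ Ioo (0 : ℝ) 1}

/-- `Q ⊆ ℝᵈ` is an open axis-aligned box. -/
def IsBox {d : ℕ} (Q : Set (Euc d)) : Prop :=
  ∃ a b : Fin d → ℝ, (∀ i, a i < b i) ∧ Q = {x : Euc d | ∀ i, x i ∈ Ioo (a i) (b i)}

/-- Tensor-product polynomial functions of coordinate degree at most `p`
(the space `Q_p(ℝᵈ)`). -/
def IsQPoly {d : ℕ} (p : ℕ) (f : Euc d → ℝ) : Prop :=
  ∃ P : MvPolynomial (Fin d) ℝ, (∀ i, P.degreeOf i ≤ p) ∧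
    ∀ x : Euc d, f x = MvPolynomial.eval (fun i => x i) P

/-- The surface measure: the `(d-1)`-dimensional Hausdorff measure on `ℝᵈ`. -/
def sMeas (d : ℕ) : Measure (Euc d) := μH[(d : ℝ) - 1]

/-- The geometric setting of isogeometric analysis on a trimmed domain:
an untrimmed patch `Ω₀ = F((0,1)ᵈ)` described by a bi-Lipschitz map `F`,
a trimmed (Lipschitz) computational domain `Ω = Ω₀ \ cl(Ω₁)`, the trimming
curve `Γ_trim = ∂Ω ∩ ∂Ω₁`, a Dirichlet part `Γ_D ⊆ ∂Ω` with outward unit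
normal `nrm`. -/
structure Geom (d : ℕ) : Type where
  /-- untrimmed physical domain -/
  Ω₀ : Set (Euc d)
  /-- trimmed-away region -/
  Ω₁ : Set (Euc d)
  /-- trimmed computational domain -/
  Ω : Set (Euc d)
  /-- Dirichlet boundary -/
  ΓD : Set (Euc d)
  /-- trimming curve -/
  Γtrim : Set (Euc d)
  /-- isogeometric parametrization -/
  F : Euc d → Euc d
  /-- inverse of the parametrization -/
  Finv : Euc d → Euc d
  /-- outward unit normal to `∂Ω` -/
  nrm : Euc d → Euc d
  /-- bi-Lipschitz constant of `F` -/
  biLip : ℝ≥0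
  Ω₀_open : IsOpen Ω₀
  trim_def : Ω = Ω₀ \ closure Ω₁
  Ω_open : IsOpen Ω
  Γtrim_def : Γtrim = frontier Ω ∩ frontier Ω₁
  ΓD_sub : ΓD ⊆ frontier Ω
  nrm_unit : ∀ x ∈ frontier Ω, ‖nrm x‖ = 1
  F_image : F '' unitCube d = Ω₀
  F_leftInv : ∀ x ∈ closure (unitCube d), Finv (F x) = x
  F_rightInv : ∀ y ∈ closure Ω₀, F (Finv y) = y
  F_lip : LipschitzOnWith biLip F (closure (unitCube d))
  Finv_lip : LipschitzOnWith biLip Finv (closure Ω₀)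
  /-- `Ω` is a Lipschitz domain: uniform interior cone condition. -/
  lipschitz_bdry : ∀ x ∈ frontier Ω, ∃ (e : Euc d) (r lam : ℝ),
    ‖e‖ = 1 ∧ 0 < r ∧ 0 < lam ∧
    ∀ y ∈ Metric.ball x r ∩ closure Ω, ∀ t ∈ Ioo (0 : ℝ) r,
      Metric.ball (y + t • e) (lam * t) ⊆ Ω

namespace Geom

variable {d : ℕ} (G : Geom d)

/-- The physical element `K = F(Q)` associated with a parametric element `Q`. -/
def phys (Q : Set (Euc d)) : Set (Euc d) := G.F '' Q

/-- `Γ_K = Γ_D ∩ cl(K)` for the physical element `K = F(Q)`. -/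
def ΓK (Q : Set (Euc d)) : Set (Euc d) := G.ΓD ∩ closure (G.phys Q)

/-- The normal derivative `∂u/∂n = ∇u ⋅ n`. -/
def dn (u : Euc d → ℝ) (x : Euc d) : ℝ := ⟪gradient u x, G.nrm x⟫_ℝ

end Geom

/-- A trimmed isogeometric Bézier mesh (of a given size level) together with the
isogeometric spline space `Ṽ_h` of degree `p`:  `pMesh` is the (active) parametric
Bézier mesh, `pCut` the family of elements cut by the trimming curve, `pGood` the
family of good elements (volume fraction at least `θ`), `nb` a choice of good
neighbor, `hsz` the piecewise-constant mesh-size function and `hmax` the global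
mesh size.  `Cshape` is the shape-regularity constant, `Cnb` the neighbor-distance
constant and `CΓ` the constant in the assumption `|Γ_K| ≤ CΓ h_K^{d-1}`. -/
structure Mesh (d p : ℕ) (G : Geom d) (θ Cshape Cnb CΓ : ℝ) : Type where
  pMesh : Finset (Set (Euc d))
  pCut : Finset (Set (Euc d))
  pGood : Finset (Set (Euc d))
  nb : Set (Euc d) → Set (Euc d)
  hsz : Euc d → ℝ
  hmax : ℝ
  Vh : Submodule ℝ (Euc d → ℝ)
  mesh_boxes : ∀ Q ∈ pMesh, IsBox Q
  mesh_sub : ∀ Q ∈ pMesh, Q ⊆ unitCube d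
  mesh_active : ∀ Q ∈ pMesh, (Q ∩ G.Finv '' G.Ω).Nonempty
  mesh_cover : G.Finv '' G.Ω ⊆ ⋃ Q ∈ pMesh, closure Q
  /-- shape regularity: each edge of an element is comparable to its diameter -/
  shape_reg : ∀ Q ∈ pMesh, ∀ a b : Fin d → ℝ,
    Q = {x : Euc d | ∀ i, x i ∈ Ioo (a i) (b i)} → ∀ i, Cshape * diam Q ≤ b i - a i
  shape_pos : 0 < Cshape
  /-- `F` and `F⁻¹` are smooth on the closure of every element -/
  F_smooth : ∀ Q ∈ pMesh, ContDiffOn ℝ (⊤ : ℕ∞) G.F (closure Q)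
  Finv_smooth : ∀ Q ∈ pMesh, ContDiffOn ℝ (⊤ : ℕ∞) G.Finv (closure (G.phys Q))
  cut_sub : pCut ⊆ pMesh
  /-- `G_h` consists exactly of the elements cut by the trimming curve -/
  cut_iff : ∀ Q ∈ pMesh, (Q ∈ pCut ↔ (closure (G.phys Q) ∩ G.Γtrim).Nonempty)
  good_sub : pGood ⊆ pMesh
  θ_mem : θ ∈ Ioc (0 : ℝ) 1
  /-- good elements: volume fraction of `Ω̂ ∩ Q` in `Q` is at least `θ` -/
  good_iff : ∀ Q ∈ pMesh,
    (Q ∈ pGood ↔ θ * (volume Q).toReal ≤ (volume (G.Finv '' G.Ω ∩ Q)).toReal)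
  /-- every (bad) element has a chosen good neighbor -/
  nb_good : ∀ Q ∈ pMesh, nb Q ∈ pGood
  nb_self : ∀ Q ∈ pGood, nb Q = Q
  /-- the chosen neighbor is at distance at most `Cnb ⬝ diam Q` -/
  nb_near : ∀ Q ∈ pMesh, ∃ x ∈ Q, ∃ y ∈ nb Q, dist x y ≤ Cnb * diam Q
  hsz_pos : ∀ x, 0 < hsz x
  hsz_eq : ∀ Q ∈ pMesh, ∀ x ∈ G.phys Q, hsz x = diam (G.phys Q)
  hmax_pos : 0 < hmax
  hmax_ge : ∀ Q ∈ pMesh, diam (G.phys Q) ≤ hmax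
  /-- splines are smooth on the closure of every element -/
  vh_smooth : ∀ v ∈ Vh, ∀ Q ∈ pMesh, ContDiffOn ℝ (⊤ : ℕ∞) v (closure (G.phys Q))
  /-- the pull-back of a spline coincides with a `Q_p` polynomial on each element -/
  vh_poly : ∀ v ∈ Vh, ∀ Q ∈ pMesh, ∃ f, IsQPoly p f ∧ EqOn (v ∘ G.F) f Q
  /-- Assumption: `|Γ_K| ≤ CΓ h_K^{d-1}` -/
  ΓK_bound : ∀ Q ∈ pMesh,
    sMeas d (G.ΓK Q) ≤ ENNReal.ofReal (CΓ * diam (G.phys Q) ^ (d - 1))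

variable {d p : ℕ} {θ Cshape Cnb CΓ : ℝ}

/-- Squared `L²(A)` norm of the gradient. -/
def gradSq {d : ℕ} (A : Set (Euc d)) (u : Euc d → ℝ) : ℝ :=
  ∫ x in A, ‖gradient u x‖ ^ 2

/-- `L²(A)` norm of the gradient, `‖∇u‖_{L²(A)}`. -/
def gradL2 {d : ℕ} (A : Set (Euc d)) (u : Euc d → ℝ) : ℝ :=
  Real.sqrt (gradSq A u)

/-- The squared mesh-dependent norm
`‖u‖²_{1,h,Ω} = ‖∇u‖²_{L²(Ω)} + ‖h^{-1/2} u‖²_{L²(Γ_D)}`. -/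
def norm1hSq (G : Geom d) (M : Mesh d p G θ Cshape Cnb CΓ) (u : Euc d → ℝ) : ℝ :=
  gradSq G.Ω u + ∫ x in G.ΓD, u x ^ 2 / M.hsz x ∂(sMeas d)

/-- The mesh-dependent norm `‖u‖_{1,h,Ω}`. -/
def norm1h (G : Geom d) (M : Mesh d p G θ Cshape Cnb CΓ) (u : Euc d → ℝ) : ℝ :=
  Real.sqrt (norm1hSq G M u)

/-- The weighted flux norm `‖h^{1/2} g‖_{L²(Γ_K)}` on the element `K = F(Q)`. -/
def wFlux (G : Geom d) (M : Mesh d p G θ Cshape Cnb CΓ) (Q : Set (Euc d))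
    (g : Euc d → ℝ) : ℝ :=
  Real.sqrt (∫ x in G.ΓK Q, M.hsz x * g x ^ 2 ∂(sMeas d))

open Classical in
/-- `K' = K` if `K` is a good element, otherwise the chosen good neighbor of `K`. -/
def nbOr (G : Geom d) (M : Mesh d p G θ Cshape Cnb CΓ) (Q : Set (Euc d)) :
    Set (Euc d) :=
  if Q ∈ M.pGood then Q else M.nb Q

/-- The symmetric Nitsche bilinear form
`a_h(u,v) = ∫_Ω ∇u⋅∇v - ∫_{Γ_D} ∂u/∂n v - ∫_{Γ_D} u ∂v/∂n + β ∫_{Γ_D} h⁻¹ u v`. -/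
def ah (G : Geom d) (M : Mesh d p G θ Cshape Cnb CΓ) (β : ℝ) (u v : Euc d → ℝ) : ℝ :=
  (∫ x in G.Ω, ⟪gradient u x, gradient v x⟫_ℝ)
    - (∫ x in G.ΓD, G.dn u x * v x ∂(sMeas d))
    - (∫ x in G.ΓD, u x * G.dn v x ∂(sMeas d))
    + β * ∫ x in G.ΓD, u x * v x / M.hsz x ∂(sMeas d)

/-- The stabilized bilinear form
`ā_h(u,v) = ∫_Ω ∇u⋅∇v - ∫_{Γ_D} R(u) v - ∫_{Γ_D} u R(v) + β ∫_{Γ_D} h⁻¹ u v`. -/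
def abarh (G : Geom d) (M : Mesh d p G θ Cshape Cnb CΓ)
    (R : (Euc d → ℝ) → Euc d → ℝ) (β : ℝ) (u v : Euc d → ℝ) : ℝ :=
  (∫ x in G.Ω, ⟪gradient u x, gradient v x⟫_ℝ)
    - (∫ x in G.ΓD, R u x * v x ∂(sMeas d))
    - (∫ x in G.ΓD, u x * R v x ∂(sMeas d))
    + β * ∫ x in G.ΓD, u x * v x / M.hsz x ∂(sMeas d)

/-- `R` is the stabilization operator obtained by polynomial extension in the
parametric domain (Definition 6.2): on good cut elements it is the normal
derivative, on bad elements it is the normal derivative of the push-forward of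
the natural polynomial extension `𝓔(v̂|_{Q'})` from the good neighbor `Q'`. -/
def IsParamStab (G : Geom d) (M : Mesh d p G θ Cshape Cnb CΓ)
    (R : (Euc d → ℝ) → Euc d → ℝ) : Prop :=
  ∀ v ∈ M.Vh,
    (∀ Q ∈ M.pCut, Q ∈ M.pGood → ∀ x ∈ G.ΓK Q, R v x = G.dn v x) ∧
    (∀ Q ∈ M.pCut, Q ∉ M.pGood → ∃ q : Euc d → ℝ, IsQPoly p q ∧
      EqOn (v ∘ G.F) q (M.nb Q) ∧ ∀ x ∈ G.ΓK Q, R v x = G.dn (q ∘ G.Finv) x)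

/-- `R` is the stabilization operator obtained by `L²`-projection in the physical
domain (Definition 6.3): on good cut elements it is the normal derivative, on bad
elements it is the normal derivative of the natural polynomial extension of the
`L²(K')`-orthogonal projection of `v|_{K'}` onto `Q_p(K')`. -/
def IsPhysStab (G : Geom d) (M : Mesh d p G θ Cshape Cnb CΓ)
    (R : (Euc d → ℝ) → Euc d → ℝ) : Prop :=
  ∀ v ∈ M.Vh,
    (∀ Q ∈ M.pCut, Q ∈ M.pGood → ∀ x ∈ G.ΓK Q, R v x = G.dn v x) ∧
    (∀ Q ∈ M.pCut, Q ∉ M.pGood → ∃ q : Euc d → ℝ, IsQPoly p q ∧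
      (∀ r : Euc d → ℝ, IsQPoly p r → ∫ x in G.phys (M.nb Q), (v x - q x) * r x = 0) ∧
      ∀ x ∈ G.ΓK Q, R v x = G.dn q x)

/-- An abstract framework of (fractional) Sobolev norms `‖⋅‖_{H^s(A)}` together
with a bounded Sobolev–Stein extension operator from `Ω` (restricted to `Ω₀`). -/
structure Sob (d : ℕ) (Ω Ω₀ : Set (Euc d)) : Type where
  /-- `mem s A v` means `v ∈ H^s(A)` -/
  mem : ℝ → Set (Euc d) → (Euc d → ℝ) → Prop
  /-- `norm s A v` is `‖v‖_{H^s(A)}` -/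
  norm : ℝ → Set (Euc d) → (Euc d → ℝ) → ℝ
  norm_nonneg : ∀ s A v, 0 ≤ norm s A v
  mem_mono_set : ∀ s (A B : Set (Euc d)) v, A ⊆ B → mem s B v → mem s A v
  mem_mono_exp : ∀ s t (A : Set (Euc d)) v, s ≤ t → mem t A v → mem s A v
  norm_mono_set : ∀ s (A B : Set (Euc d)) v, A ⊆ B → norm s A v ≤ norm s B v
  norm_mono_exp : ∀ s t (A : Set (Euc d)) v, s ≤ t → mem t A v → norm s A v ≤ norm t A v
  /-- `H⁰ = L²` -/
  norm_zero : ∀ (A : Set (Euc d)) v, norm 0 A v = Real.sqrt (∫ x in A, v x ^ 2)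
  /-- the gradient seminorm is dominated by the `H¹` norm -/
  grad_le_one : ∀ (A : Set (Euc d)) v, mem 1 A v → gradL2 A v ≤ norm 1 A v
  /-- the Sobolev–Stein extension operator (its restriction to `Ω₀`) -/
  ext : (Euc d → ℝ) → Euc d → ℝ
  ext_eq : ∀ v, EqOn (ext v) v Ω
  ext_bound : ∀ s : ℝ, 0 ≤ s → ∃ C > (0 : ℝ), ∀ v, mem s Ω v →
    mem s Ω₀ (ext v) ∧ norm s Ω₀ (ext v) ≤ C * norm s Ω v

/-- The Laplacian of `u : ℝᵈ → ℝ`. -/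
def lapl {d : ℕ} (u : Euc d → ℝ) (x : Euc d) : ℝ :=
  ∑ i : Fin d, fderiv ℝ (fun y => fderiv ℝ u y (EuclideanSpace.single i 1)) x
    (EuclideanSpace.single i 1)

end

/-!
An element `K` is the image `F(Q)` of a box `Q`, and `v ∘ F` is a polynomial `f` of degree `p` on
`Q`. All norms on a finite-dimensional polynomial space are equivalent, so after affine rescaling
to the unit cube `|Q| ‖∇f(y)‖² ≤ κ ∫_Q ‖∇f‖²` for every `y ∈ Q`, with `κ` depending only on `d`
and `p`. The bi-Lipschitz map `F` carries this estimate to `‖∇v(x)‖² ≤ C h⁻ᵈ ∫_K ‖∇v‖²` on `K`,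
and continuity of the derivative up to the boundary carries it to `cl(K) ⊇ Γ_K`. Integrating
over `Γ_K`, whose measure is at most `CΓ hᵈ⁻¹`, leaves the factor `h⁻¹`, wherever in
`cl(K)` the set `Γ_K` lies.
-/

section FiniteDimensional

variable {X F : Type*} [TopologicalSpace X] [MeasurableSpace X] [BorelSpace X]
  [NormedAddCommGroup F] [NormedSpace ℝ F] [SecondCountableTopology F]

lemma norm_toLp_two_sq [CompactSpace X] (μ : Measure X) [IsFiniteMeasure μ] (f : C(X, F)) :
    ‖ContinuousMap.toLp 2 μ ℝ f‖ ^ 2 = ∫ x, ‖f x‖ ^ 2 ∂μ := by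
  have hf : MemLp f 2 μ := (memLp_congr_ae (ContinuousMap.coeFn_toLp (𝕜 := ℝ) μ f)).1 (Lp.memLp _)
  rw [Lp.norm_def, eLpNorm_congr_ae (ContinuousMap.coeFn_toLp (𝕜 := ℝ) μ f),
    hf.eLpNorm_eq_integral_rpow_norm two_ne_zero ENNReal.ofNat_ne_top,
    ENNReal.toReal_ofReal (by positivity)]
  have integral_nonneg : 0 ≤ ∫ x, ‖f x‖ ^ 2 ∂μ := by positivity
  simp only [ENNReal.toReal_ofNat, Real.rpow_ofNat, ← one_div, ← Real.sqrt_eq_rpow,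
    Real.sq_sqrt integral_nonneg]

lemma exists_norm_sq_le_mul_integral [CompactSpace X] (μ : Measure X) [IsFiniteMeasure μ]
    [μ.IsOpenPosMeasure] (W : Submodule ℝ C(X, F)) [FiniteDimensional ℝ W] :
    ∃ κ > (0 : ℝ), ∀ f ∈ W, ‖f‖ ^ 2 ≤ κ * ∫ x, ‖f x‖ ^ 2 ∂μ := by
  let toL2 : W →ₗ[ℝ] Lp F 2 μ := (ContinuousMap.toLp 2 μ ℝ).toLinearMap ∘ₗ W.subtype
  have toL2_injective : Function.Injective toL2 :=
    (ContinuousMap.toLp_injective μ).comp W.subtype_injective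
  obtain ⟨κ, κ_pos, hκ⟩ := toL2.exists_antilipschitzWith (LinearMap.ker_eq_bot.2 toL2_injective)
  refine ⟨κ ^ 2, by positivity, fun f hf => ?_⟩
  have norm_le : ‖f‖ ≤ κ * ‖ContinuousMap.toLp 2 μ ℝ f‖ :=
    ZeroHomClass.bound_of_antilipschitz toL2 hκ ⟨f, hf⟩
  calc ‖f‖ ^ 2 ≤ (κ * ‖ContinuousMap.toLp 2 μ ℝ f‖) ^ 2 := by gcongr
    _ = κ ^ 2 * ∫ x, ‖f x‖ ^ 2 ∂μ := by rw [mul_pow, norm_toLp_two_sq]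

lemma isOpenPosMeasure_comap_closure {s : Set X} (hs : IsOpen s) (μ : Measure X)
    [μ.IsOpenPosMeasure] :
    ((μ.restrict s).comap ((↑) : closure s → X)).IsOpenPosMeasure := by
  refine ⟨fun U hU hU_nonempty => ?_⟩
  obtain ⟨V, hV, rfl⟩ := isOpen_induced_iff.1 hU
  obtain ⟨x, hxV⟩ := hU_nonempty
  have hVs : (V ∩ s).Nonempty := mem_closure_iff.1 x.2 V hV hxV
  rw [comap_subtype_coe_apply isClosed_closure.measurableSet, Subtype.image_preimage_coe,
    Measure.restrict_apply (isClosed_closure.measurableSet.inter hV.measurableSet)]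
  have : closure s ∩ V ∩ s = V ∩ s := by
    rw [inter_comm (closure s), inter_assoc, inter_eq_self_of_subset_right subset_closure]
  rw [this]
  exact (hV.inter hs).measure_ne_zero μ hVs

lemma exists_norm_sq_le_mul_setIntegral {s : Set X} (hs : IsOpen s)
    (hs_compact : IsCompact (closure s)) (μ : Measure X) [IsFiniteMeasureOnCompacts μ]
    [μ.IsOpenPosMeasure] (W : Submodule ℝ C(X, F)) [FiniteDimensional ℝ W] :
    ∃ κ > (0 : ℝ), ∀ f ∈ W, ∀ x ∈ closure s, ‖f x‖ ^ 2 ≤ κ * ∫ y in s, ‖f y‖ ^ 2 ∂μ := by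
  have : CompactSpace (closure s) := isCompact_iff_compactSpace.1 hs_compact
  have := isOpenPosMeasure_comap_closure hs μ
  have : IsFiniteMeasure ((μ.restrict s).comap ((↑) : closure s → X)) := by
    refine ⟨?_⟩
    rw [comap_subtype_coe_apply isClosed_closure.measurableSet]
    exact (Measure.restrict_apply_le s _).trans_lt (by simpa using hs_compact.measure_lt_top)
  let restrictₗ : C(X, F) →ₗ[ℝ] C(closure s, F) :=
    { toFun f := f.restrict (closure s)
      map_add' _ _ := rfl
      map_smul' _ _ := rfl }
  obtain ⟨κ, κ_pos, hκ⟩ := exists_norm_sq_le_mul_integral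
    ((μ.restrict s).comap ((↑) : closure s → X)) (W.map restrictₗ)
  refine ⟨κ, κ_pos, fun f hf x hx => ?_⟩
  calc ‖f x‖ ^ 2 ≤ ‖f.restrict (closure s)‖ ^ 2 := by
        gcongr
        exact (f.restrict (closure s)).norm_coe_le_norm ⟨x, hx⟩
    _ ≤ κ * ∫ y : closure s, ‖f y‖ ^ 2 ∂(μ.restrict s).comap (↑) :=
        hκ _ (Submodule.mem_map_of_mem hf)
    _ = κ * ∫ y in s, ‖f y‖ ^ 2 ∂μ := by
        rw [integral_subtype_comap isClosed_closure.measurableSet fun y => ‖f y‖ ^ 2,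
          Measure.restrict_restrict isClosed_closure.measurableSet,
          inter_eq_self_of_subset_right subset_closure]

end FiniteDimensional

section Polynomials

open MvPolynomial

lemma hasFDerivAt_eval_mvPolynomial {σ : Type*} [Fintype σ] (P : MvPolynomial σ ℝ) (x : σ → ℝ) :
    HasFDerivAt (fun y => eval y P)
      (∑ i, eval x (pderiv i P) • (ContinuousLinearMap.proj i : (σ → ℝ) →L[ℝ] ℝ)) x := by
  classical
  induction P using MvPolynomial.induction_on with
  | C a => simpa using hasFDerivAt_const a x
  | add P R hP hR =>
    simpa [add_smul, Finset.sum_add_distrib] using hP.fun_add hR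
  | mul_X P j hP =>
    have hX : HasFDerivAt (fun y : σ → ℝ => y j) (ContinuousLinearMap.proj j) x :=
      (ContinuousLinearMap.proj j : (σ → ℝ) →L[ℝ] ℝ).hasFDerivAt
    simpa [pderiv_X, Pi.single_apply, add_smul, Finset.sum_add_distrib, Finset.smul_sum,
      smul_smul, mul_comm, apply_ite (eval x)] using hP.fun_mul hX

lemma degreeOf_pderiv_le {σ R : Type*} [CommSemiring R] (P : MvPolynomial σ R) (i j : σ) :
    (pderiv i P).degreeOf j ≤ P.degreeOf j := by
  rw [degreeOf_le_iff]
  intro m hm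
  rw [mem_support_iff, coeff_pderiv] at hm
  calc m j ≤ (m + Finsupp.single i 1 : σ →₀ ℕ) j := by simp
    _ ≤ P.degreeOf j :=
      monomial_le_degreeOf j (mem_support_iff.2 (left_ne_zero_of_mul hm))

lemma degreeOf_bind₁_le {σ R : Type*} [CommSemiring R] {g : σ → MvPolynomial σ R} {j : σ}
    (hg_self : (g j).degreeOf j ≤ 1) (hg_other : ∀ i ≠ j, (g i).degreeOf j = 0)
    (P : MvPolynomial σ R) : (bind₁ g P).degreeOf j ≤ P.degreeOf j := by
  classical
  rw [bind₁, aeval_def, eval₂_eq]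
  refine (degreeOf_sum_le _ _ _).trans (Finset.sup_le fun m hm => ?_)
  have degreeOf_factor_le (i : σ) :
      (g i ^ m i).degreeOf j ≤ if i = j then m i else 0 := by
    refine (degreeOf_pow_le _ _ _).trans ?_
    split_ifs with hij
    · subst hij
      simpa using Nat.mul_le_mul_left (m i) hg_self
    · simp [hg_other i hij]
  calc _ ≤ (∏ i ∈ m.support, g i ^ m i).degreeOf j := by
        rw [algebraMap_eq]; exact degreeOf_C_mul_le _ _ _
    _ ≤ ∑ i ∈ m.support, (g i ^ m i).degreeOf j := degreeOf_prod_le _ _ _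
    _ ≤ ∑ i ∈ m.support, if i = j then m i else 0 :=
        Finset.sum_le_sum fun i _ => degreeOf_factor_le i
    _ ≤ m j := by rw [Finset.sum_ite_eq']; split_ifs <;> simp
    _ ≤ P.degreeOf j := monomial_le_degreeOf j hm

end Polynomials

namespace IsQPoly

open MvPolynomial

variable {d p : ℕ} {f : Euc d → ℝ}

lemma contDiff (hf : IsQPoly p f) : ContDiff ℝ 1 f := by
  obtain ⟨P, -, hP⟩ := hf
  rw [funext hP]
  have coord_analytic (i : Fin d) : AnalyticOnNhd ℝ (fun x : Euc d => x i) univ :=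
    (EuclideanSpace.proj i : Euc d →L[ℝ] ℝ).analyticOnNhd univ
  exact (AnalyticOnNhd.aeval_mvPolynomial coord_analytic P).contDiff

lemma fderiv_apply (hf : IsQPoly p f) (u : Euc d) : IsQPoly p fun x => fderiv ℝ f x u := by
  obtain ⟨P, hP, hfP⟩ := hf
  refine ⟨∑ i, C (u i) * pderiv i P, fun j => ?_, fun x => ?_⟩
  · refine (degreeOf_sum_le _ _ _).trans (Finset.sup_le fun i _ => ?_)
    exact (degreeOf_C_mul_le _ _ _).trans ((degreeOf_pderiv_le P i j).trans (hP j))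
  · have hfderiv := (hasFDerivAt_eval_mvPolynomial P x.ofLp).comp x
      (PiLp.hasFDerivAt_ofLp (𝕜 := ℝ) 2 x)
    have hf_eq : f = (fun y => eval y P) ∘ WithLp.ofLp := funext hfP
    simp [hf_eq, hfderiv.fderiv, mul_comm]

lemma comp_affine (hf : IsQPoly p f) (a b : Fin d → ℝ) :
    IsQPoly p fun t : Euc d => f (WithLp.toLp 2 fun i => a i + b i * t i) := by
  obtain ⟨P, hP, hfP⟩ := hf
  refine ⟨bind₁ (fun i => C (a i) + C (b i) * X i) P, fun j => ?_, fun t => ?_⟩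
  · refine (degreeOf_bind₁_le ?_ (fun i hij => ?_) P).trans (hP j)
    · refine (degreeOf_add_le _ _ _).trans (max_le (by simp) ?_)
      exact (degreeOf_C_mul_le _ _ _).trans (by simp)
    · refine Nat.le_zero.1 ((degreeOf_add_le _ _ _).trans (max_le (by simp) ?_))
      exact (degreeOf_C_mul_le _ _ _).trans (by simp [degreeOf_X, hij.symm])
  · simp only [hfP, eval, eval₂Hom_bind₁]
    simp

end IsQPoly

/-- The space `Q_p(ℝᵈ)` of tensor-product polynomials, as a subspace of the continuous functions:
the image of the polynomials of coordinate degree at most `p` under evaluation. -/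
noncomputable def qPolySpace (d p : ℕ) : Submodule ℝ C(Euc d, ℝ) :=
  (MvPolynomial.restrictDegree (Fin d) ℝ p).map
    (MvPolynomial.aeval fun i => (⟨fun x => x i, by fun_prop⟩ : C(Euc d, ℝ))).toLinearMap

instance (d p : ℕ) : FiniteDimensional ℝ (qPolySpace d p) := by
  unfold qPolySpace
  infer_instance

lemma IsQPoly.exists_mem_qPolySpace {d p : ℕ} {f : Euc d → ℝ} (hf : IsQPoly p f) :
    ∃ g ∈ qPolySpace d p, ⇑g = f := by
  obtain ⟨P, hP, hfP⟩ := hf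
  refine ⟨_, Submodule.mem_map_of_mem ((MvPolynomial.mem_restrictDegree _ _ _).2
    fun m hm i => (MvPolynomial.monomial_le_degreeOf i hm).trans (hP i)), funext fun x => ?_⟩
  rw [hfP]
  let evalAt : C(Euc d, ℝ) →ₐ[ℝ] ℝ := ContinuousMap.evalAlgHom ℝ ℝ x
  exact MvPolynomial.map_aeval _ evalAt.toRingHom P

section Boxes

variable {d : ℕ} {a b : Fin d → ℝ}

/-- The open axis-aligned box `∏ᵢ (aᵢ, bᵢ)`. -/
def openBox (a b : Fin d → ℝ) : Set (Euc d) := {x | ∀ i, x i ∈ Ioo (a i) (b i)}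

/-- The affine map carrying `(0,1)ᵈ` onto `∏ᵢ (aᵢ, bᵢ)`. -/
def boxMap (a b : Fin d → ℝ) (t : Euc d) : Euc d :=
  WithLp.toLp 2 fun i => a i + (b i - a i) * t i

lemma isOpen_openBox (a b : Fin d → ℝ) : IsOpen (openBox a b) := by
  simp only [openBox, Set.ofPred_forall]
  exact isOpen_iInter_of_finite fun i => isOpen_Ioo.preimage (by fun_prop)

lemma convex_openBox (a b : Fin d → ℝ) : Convex ℝ (openBox a b) := by
  simp only [openBox, Set.ofPred_forall]
  exact convex_iInter fun i =>
    (convex_Ioo (a i) (b i)).linear_preimage (EuclideanSpace.proj i : Euc d →L[ℝ] ℝ).toLinearMap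

lemma isCompact_closure_openBox (a b : Fin d → ℝ) : IsCompact (closure (openBox a b)) :=
  ((isCompact_Icc (a := a) (b := b)).image (PiLp.continuous_toLp 2 _)).isBounded.subset
    (fun x hx => ⟨x.ofLp, ⟨fun i => (hx i).1.le, fun i => (hx i).2.le⟩, rfl⟩) |>.isCompact_closure

lemma boxMap_image_unitCube (hab : ∀ i, a i < b i) : boxMap a b '' unitCube d = openBox a b := by
  ext x
  constructor
  · rintro ⟨t, ht, rfl⟩ i
    have hi := sub_pos.2 (hab i)
    obtain ⟨t_pos, t_lt⟩ := ht i
    constructor <;> simp only [boxMap] <;> nlinarith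
  · intro hx
    refine ⟨WithLp.toLp 2 fun i => (x i - a i) / (b i - a i), fun i => ?_, ?_⟩
    · have hi := sub_pos.2 (hab i)
      obtain ⟨x_gt, x_lt⟩ := hx i
      exact ⟨div_pos (sub_pos.2 x_gt) hi, (div_lt_one hi).2 (by linarith)⟩
    · ext i
      have hi := (sub_pos.2 (hab i)).ne'
      simp only [boxMap]
      field_simp
      ring

lemma openBox_nonempty (hab : ∀ i, a i < b i) : (openBox a b).Nonempty :=
  ⟨WithLp.toLp 2 fun i => (a i + b i) / 2, fun i =>
    ⟨left_lt_add_div_two.2 (hab i), add_div_two_lt_right.2 (hab i)⟩⟩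

lemma boxMap_injective (hab : ∀ i, a i < b i) : Function.Injective (boxMap a b) := by
  intro s t hst
  ext i
  have := congr_arg (fun x : Euc d => x i) hst
  simpa [boxMap, (sub_pos.2 (hab i)).ne'] using this

lemma hasFDerivAt_boxMap (t : Euc d) :
    HasFDerivAt (boxMap a b) (Matrix.toEuclideanCLM (𝕜 := ℝ) (Matrix.diagonal (b - a))) t := by
  have boxMap_eq : boxMap a b = fun t =>
      Matrix.toEuclideanCLM (𝕜 := ℝ) (Matrix.diagonal (b - a)) t + WithLp.toLp 2 a := by
    ext t i
    simp [boxMap, Matrix.mulVec_diagonal, add_comm]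
  rw [boxMap_eq]
  exact (ContinuousLinearMap.hasFDerivAt _).add_const _

lemma setIntegral_openBox {E : Type*} [NormedAddCommGroup E] [NormedSpace ℝ E]
    (hab : ∀ i, a i < b i) (g : Euc d → E) :
    ∫ x in openBox a b, g x = (∏ i, (b i - a i)) • ∫ t in unitCube d, g (boxMap a b t) := by
  have det_eq : (Matrix.toEuclideanCLM (𝕜 := ℝ) (Matrix.diagonal (b - a))).det =
      ∏ i, (b i - a i) := by
    rw [ContinuousLinearMap.det, Matrix.coe_toEuclideanCLM_eq_toEuclideanLin,
      Matrix.toEuclideanLin_eq_toLin_orthonormal, LinearMap.det_toLin, Matrix.det_diagonal]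
    rfl
  have unitCube_measurable : MeasurableSet (unitCube d) := (isOpen_openBox 0 1).measurableSet
  rw [← boxMap_image_unitCube hab, integral_image_eq_integral_abs_det_fderiv_smul volume
    unitCube_measurable (fun t _ => (hasFDerivAt_boxMap t).hasFDerivWithinAt)
    (boxMap_injective hab).injOn, det_eq,
    abs_of_pos (Finset.prod_pos fun i _ => sub_pos.2 (hab i)), integral_smul]

lemma exists_prod_mul_sq_le_mul_setIntegral_openBox (d p : ℕ) :
    ∃ κ > (0 : ℝ), ∀ (a b : Fin d → ℝ), (∀ i, a i < b i) → ∀ f : Euc d → ℝ, IsQPoly p f →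
      ∀ x ∈ openBox a b, (∏ i, (b i - a i)) * f x ^ 2 ≤ κ * ∫ y in openBox a b, f y ^ 2 := by
  obtain ⟨κ, κ_pos, hκ⟩ := exists_norm_sq_le_mul_setIntegral (isOpen_openBox 0 1)
    (isCompact_closure_openBox 0 1) volume (qPolySpace d p)
  refine ⟨κ, κ_pos, fun a b hab f hf x hx => ?_⟩
  obtain ⟨g, hg, hgf⟩ := (hf.comp_affine a (b - a)).exists_mem_qPolySpace
  obtain ⟨t, ht, rfl⟩ := (boxMap_image_unitCube hab).ge hx
  have hgf (t : Euc d) : g t = f (boxMap a b t) := congr_fun hgf t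
  have prod_pos : 0 < ∏ i, (b i - a i) := Finset.prod_pos fun i _ => sub_pos.2 (hab i)
  have cube_bound := hκ g hg t (subset_closure ht)
  simp only [hgf, Real.norm_eq_abs, sq_abs] at cube_bound
  rw [setIntegral_openBox hab, smul_eq_mul, mul_left_comm]
  exact mul_le_mul_of_nonneg_left cube_bound prod_pos.le

lemma exists_prod_mul_norm_fderiv_sq_le (d p : ℕ) :
    ∃ κ > (0 : ℝ), ∀ (a b : Fin d → ℝ), (∀ i, a i < b i) → ∀ f : Euc d → ℝ, IsQPoly p f →
      ∀ x ∈ openBox a b, (∏ i, (b i - a i)) * ‖fderiv ℝ f x‖ ^ 2 ≤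
        κ * ∫ y in openBox a b, ‖fderiv ℝ f y‖ ^ 2 := by
  obtain ⟨κ, κ_pos, hκ⟩ := exists_prod_mul_sq_le_mul_setIntegral_openBox d p
  refine ⟨κ, κ_pos, fun a b hab f hf x hx => ?_⟩
  have prod_pos : 0 < ∏ i, (b i - a i) := Finset.prod_pos fun i _ => sub_pos.2 (hab i)
  set I := ∫ y in openBox a b, ‖fderiv ℝ f y‖ ^ 2
  have fderiv_cont : Continuous (fderiv ℝ f) := hf.contDiff.continuous_fderiv one_ne_zero
  have integrable {g : Euc d → ℝ} (hg : Continuous g) : IntegrableOn g (openBox a b) :=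
    (hg.continuousOn.integrableOn_compact (isCompact_closure_openBox a b)).mono_set subset_closure
  have directional (u : Euc d) :
      (∏ i, (b i - a i)) * (fderiv ℝ f x u) ^ 2 ≤ κ * (I * ‖u‖ ^ 2) := by
    refine (hκ a b hab _ (hf.fderiv_apply u) x hx).trans ?_
    gcongr
    rw [← integral_mul_const]
    refine setIntegral_mono (integrable (by fun_prop)) (integrable (by fun_prop)) fun y => ?_
    rw [← mul_pow, ← sq_abs]
    gcongr
    exact (fderiv ℝ f y).le_opNorm u
  have opNorm_le : ‖fderiv ℝ f x‖ ≤ √(κ * I / ∏ i, (b i - a i)) := by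
    refine ContinuousLinearMap.opNorm_le_bound _ (Real.sqrt_nonneg _) fun u => ?_
    rw [← Real.sqrt_sq (norm_nonneg u), ← Real.sqrt_mul (by positivity)]
    refine Real.abs_le_sqrt ?_
    rw [div_mul_eq_mul_div, le_div_iff₀ prod_pos, mul_comm, mul_assoc]
    exact directional u
  rw [Real.le_sqrt (norm_nonneg _) (by positivity), le_div_iff₀ prod_pos, mul_comm] at opNorm_le
  exact opNorm_le

end Boxes

section LipschitzImage

variable {E : Type*} [NormedAddCommGroup E] [NormedSpace ℝ E] [FiniteDimensional ℝ E]
  [MeasurableSpace E] [BorelSpace E] {μ : Measure E} [μ.IsAddHaarMeasure]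
  {Φ : E → E} {L : ℝ≥0} {s : Set E}

open Module (finrank)

lemma measure_image_le_of_lipschitzOn (hΦ : LipschitzOnWith L Φ s) :
    μ (Φ '' s) ≤ (L : ℝ≥0∞) ^ finrank ℝ E * μ s := by
  have hausdorff_le := hΦ.hausdorffMeasure_image_le (d := finrank ℝ E) (Nat.cast_nonneg _)
  rw [ENNReal.rpow_natCast] at hausdorff_le
  rw [Measure.isAddLeftInvariant_eq_smul μ μH[finrank ℝ E]]
  simp only [Measure.smul_apply, ENNReal.smul_def, smul_eq_mul]
  rw [mul_left_comm]
  gcongr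

lemma restrict_image_le_of_lipschitzOn (hs : MeasurableSet s) (hΦ : LipschitzOnWith L Φ s) :
    μ.restrict (Φ '' s) ≤ (L : ℝ≥0∞) ^ finrank ℝ E • (μ.restrict s).map Φ := by
  have Φ_aemeasurable : AEMeasurable Φ (μ.restrict s) := hΦ.continuousOn.aemeasurable hs
  refine Measure.le_iff.2 fun t ht => ?_
  rw [Measure.restrict_apply ht, Measure.smul_apply, smul_eq_mul,
    Measure.map_apply_of_aemeasurable Φ_aemeasurable ht, Measure.restrict_apply' hs, inter_comm t,
    ← image_inter_preimage, inter_comm s]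
  exact measure_image_le_of_lipschitzOn (hΦ.mono inter_subset_right)

lemma setIntegral_image_le_of_lipschitzOn (hs : MeasurableSet s) (hΦ : LipschitzOnWith L Φ s)
    {g : E → ℝ} (hg : Continuous g) (hg_nonneg : 0 ≤ g)
    (hgΦ : IntegrableOn (g ∘ Φ) s μ) :
    ∫ y in Φ '' s, g y ∂μ ≤ (L : ℝ) ^ finrank ℝ E * ∫ x in s, g (Φ x) ∂μ := by
  have Φ_aemeasurable : AEMeasurable Φ (μ.restrict s) := hΦ.continuousOn.aemeasurable hs
  have g_integrable : Integrable g ((L : ℝ≥0∞) ^ finrank ℝ E • (μ.restrict s).map Φ) :=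
    ((integrable_map_measure hg.aestronglyMeasurable Φ_aemeasurable).2 hgΦ).smul_measure
      (by finiteness)
  calc ∫ y in Φ '' s, g y ∂μ
      ≤ ∫ y, g y ∂((L : ℝ≥0∞) ^ finrank ℝ E • (μ.restrict s).map Φ) :=
        integral_mono_measure (restrict_image_le_of_lipschitzOn hs hΦ)
          (Filter.Eventually.of_forall hg_nonneg) g_integrable
    _ = (L : ℝ) ^ finrank ℝ E * ∫ x in s, g (Φ x) ∂μ := by
        rw [integral_smul_measure, integral_map Φ_aemeasurable hg.aestronglyMeasurable]
        simp

end LipschitzImage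

section UpToBoundary

open scoped Topology

variable {E F : Type*} [NormedAddCommGroup E] [NormedSpace ℝ E]
  [NormedAddCommGroup F] [NormedSpace ℝ F]

lemma uniqueDiffOn_image_of_leftInvOn [FiniteDimensional ℝ E] {s : Set E} {f g : E → E}
    (hs : UniqueDiffOn ℝ s) (hf : DifferentiableOn ℝ f s) (hg : DifferentiableOn ℝ g (f '' s))
    (hgf : LeftInvOn g f s) : UniqueDiffOn ℝ (f '' s) := by
  refine hs.image (fun x hx => (hf x hx).hasFDerivWithinAt) fun x hx => ?_
  have comp_eq_id : (fderivWithin ℝ g (f '' s) (f x)).comp (fderivWithin ℝ f s x) = .id ℝ E :=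
    (hs x hx).eq
      ((hg _ (mem_image_of_mem f hx)).hasFDerivWithinAt.comp x (hf x hx).hasFDerivWithinAt
        (mapsTo_image f s))
      ((hasFDerivWithinAt_id x s).congr hgf (hgf hx))
  have fderiv_injective : Function.Injective (fderivWithin ℝ f s x) :=
    Function.LeftInverse.injective (DFunLike.congr_fun comp_eq_id)
  exact (LinearMap.injective_iff_surjective.1 fderiv_injective).denseRange

variable {s : Set E} {v : E → F}

lemma norm_fderiv_le_of_mem_closure (hs : IsOpen s) (hs_unique : UniqueDiffOn ℝ (closure s))
    (hv : ContDiffOn ℝ 1 v (closure s)) {C : ℝ} (hC : ∀ x ∈ s, ‖fderiv ℝ v x‖ ≤ C)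
    {x : E} (hx : x ∈ closure s) : ‖fderiv ℝ v x‖ ≤ C := by
  have within_le : ‖fderivWithin ℝ v (closure s) x‖ ≤ C :=
    le_on_closure (f := fun x => ‖fderivWithin ℝ v (closure s) x‖)
      (fun y hy => by
        rw [fderivWithin_of_mem_nhds (Filter.mem_of_superset (hs.mem_nhds hy) subset_closure)]
        exact hC y hy)
      (hv.continuousOn_fderivWithin hs_unique le_rfl).norm continuousOn_const hx
  by_cases hvx : DifferentiableAt ℝ v x
  · rwa [← hvx.fderivWithin (hs_unique x hx)]
  · rw [fderiv_zero_of_not_differentiableAt hvx, norm_zero]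
    exact (norm_nonneg _).trans within_le

lemma integrableOn_norm_fderiv_sq [MeasurableSpace E] [OpensMeasurableSpace E] {μ : Measure E}
    [IsFiniteMeasureOnCompacts μ] (hs : IsOpen s) (hs_compact : IsCompact (closure s))
    (hs_unique : UniqueDiffOn ℝ (closure s)) (hv : ContDiffOn ℝ 1 v (closure s)) :
    IntegrableOn (fun x => ‖fderiv ℝ v x‖ ^ 2) s μ := by
  have within_integrable : IntegrableOn (fun x => ‖fderivWithin ℝ v (closure s) x‖ ^ 2) s μ :=
    (((hv.continuousOn_fderivWithin hs_unique le_rfl).norm.pow 2).integrableOn_compact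
      hs_compact).mono_set subset_closure
  refine within_integrable.congr_fun (fun x hx => ?_) hs.measurableSet
  dsimp only
  rw [fderivWithin_of_mem_nhds (Filter.mem_of_superset (hs.mem_nhds hx) subset_closure)]

lemma norm_fderiv_le_of_eventuallyEq_comp {G : Type*} [NormedAddCommGroup G] [NormedSpace ℝ G]
    {x : E} {f : G → F} {Φ : E → G} {L : ℝ≥0} (hs : s ∈ 𝓝 x) (hΦ_lip : LipschitzOnWith L Φ s)
    (hΦ : DifferentiableAt ℝ Φ x) (hf : DifferentiableAt ℝ f (Φ x)) (hv : v =ᶠ[𝓝 x] f ∘ Φ) :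
    ‖fderiv ℝ v x‖ ≤ L * ‖fderiv ℝ f (Φ x)‖ := by
  rw [hv.fderiv_eq, fderiv_comp x hf hΦ, mul_comm]
  refine (ContinuousLinearMap.opNorm_comp_le _ _).trans ?_
  gcongr
  exact norm_fderiv_le_of_lipschitzOn ℝ hs hΦ_lip

end UpToBoundary

lemma norm_gradient_eq_norm_fderiv {𝕜 E : Type*} [RCLike 𝕜] [NormedAddCommGroup E]
    [InnerProductSpace 𝕜 E] [CompleteSpace E] (v : E → 𝕜) (x : E) :
    ‖gradient v x‖ = ‖fderiv 𝕜 v x‖ := by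
  simp [gradient]

lemma isCompact_closure_of_subset_unitCube {d : ℕ} {Q : Set (Euc d)}
    (hQ : Q ⊆ unitCube d) : IsCompact (closure Q) :=
  (isCompact_closure_openBox 0 1).of_isClosed_subset isClosed_closure (closure_mono hQ)

namespace Geom

variable {d : ℕ} (G : Geom d) {Q : Set (Euc d)}

lemma phys_subset_Ω₀ (hQ : Q ⊆ unitCube d) : G.phys Q ⊆ G.Ω₀ :=
  (image_mono hQ).trans_eq G.F_image

lemma Finv_image_phys (hQ : Q ⊆ unitCube d) : G.Finv '' G.phys Q = Q :=
  LeftInvOn.image_image fun y hy => G.F_leftInv y (subset_closure (hQ hy))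

lemma phys_eq_inter_preimage (hQ : Q ⊆ unitCube d) : G.phys Q = G.Ω₀ ∩ G.Finv ⁻¹' Q := by
  refine Subset.antisymm (fun x hx => ?_) fun x ⟨hx, hxQ⟩ => ?_
  · exact ⟨G.phys_subset_Ω₀ hQ hx, (G.Finv_image_phys hQ).le (mem_image_of_mem _ hx)⟩
  · exact ⟨G.Finv x, hxQ, G.F_rightInv x (subset_closure hx)⟩

lemma isOpen_phys (hQ : Q ⊆ unitCube d) (hQ_open : IsOpen Q) : IsOpen (G.phys Q) := by
  rw [G.phys_eq_inter_preimage hQ]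
  exact (G.Finv_lip.continuousOn.mono subset_closure).isOpen_inter_preimage G.Ω₀_open hQ_open

lemma closure_phys (hQ : Q ⊆ unitCube d) : closure (G.phys Q) = G.F '' closure Q := by
  have F_cont : ContinuousOn G.F (closure Q) := G.F_lip.continuousOn.mono (closure_mono hQ)
  refine Subset.antisymm (closure_minimal (image_mono subset_closure) ?_) F_cont.image_closure
  exact ((isCompact_closure_of_subset_unitCube hQ).image_of_continuousOn F_cont).isClosed

lemma diam_phys_le (hQ : Q ⊆ unitCube d) : diam (G.phys Q) ≤ G.biLip * diam Q := by
  refine diam_le_of_forall_dist_le (mul_nonneg G.biLip.2 diam_nonneg) ?_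
  rintro _ ⟨x, hx, rfl⟩ _ ⟨y, hy, rfl⟩
  refine (G.F_lip.dist_le_mul x (subset_closure (hQ hx)) y (subset_closure (hQ hy))).trans ?_
  gcongr
  exact dist_le_diam_of_mem
    ((isCompact_closure_of_subset_unitCube hQ).isBounded.subset subset_closure) hx hy

lemma abs_dn_le_norm_gradient (v : Euc d → ℝ) {x : Euc d} (hx : x ∈ frontier G.Ω) :
    |G.dn v x| ≤ ‖gradient v x‖ := by
  rw [← mul_one ‖gradient v x‖, ← G.nrm_unit x hx]
  exact abs_real_inner_le_norm _ _

end Geom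

namespace Mesh

open scoped Topology

variable {d p : ℕ} {G : Geom d} {θ Cshape Cnb CΓ : ℝ} (M : Mesh d p G θ Cshape Cnb CΓ)
  {Q : Set (Euc d)}

lemma isOpen_of_mem_pMesh (hQ : Q ∈ M.pMesh) : IsOpen Q := by
  obtain ⟨a, b, -, rfl⟩ := M.mesh_boxes Q hQ
  exact isOpen_openBox a b

lemma isOpen_phys (hQ : Q ∈ M.pMesh) : IsOpen (G.phys Q) :=
  G.isOpen_phys (M.mesh_sub Q hQ) (M.isOpen_of_mem_pMesh hQ)

lemma isCompact_closure_phys (hQ : Q ∈ M.pMesh) : IsCompact (closure (G.phys Q)) := by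
  rw [G.closure_phys (M.mesh_sub Q hQ)]
  exact (isCompact_closure_of_subset_unitCube (M.mesh_sub Q hQ)).image_of_continuousOn
    (M.F_smooth Q hQ).continuousOn

lemma Finv_lipschitzOn_closure_phys (hQ : Q ∈ M.pMesh) :
    LipschitzOnWith G.biLip G.Finv (closure (G.phys Q)) :=
  G.Finv_lip.mono (closure_mono (G.phys_subset_Ω₀ (M.mesh_sub Q hQ)))

lemma diam_phys_pos (hQ : Q ∈ M.pMesh) : 0 < diam (G.phys Q) := by
  obtain ⟨y, hy, -⟩ := M.mesh_active Q hQ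
  rw [← M.hsz_eq Q hQ (G.F y) (mem_image_of_mem _ hy)]
  exact M.hsz_pos _

lemma dim_ne_zero (hQ : Q ∈ M.pMesh) : d ≠ 0 := by
  rintro rfl
  exact (M.diam_phys_pos hQ).ne' (diam_subsingleton subsingleton_of_subsingleton)

lemma uniqueDiffOn_closure_phys (hQ : Q ∈ M.pMesh) : UniqueDiffOn ℝ (closure (G.phys Q)) := by
  obtain ⟨a, b, hab, hQ_eq⟩ := M.mesh_boxes Q hQ
  have closureQ_unique : UniqueDiffOn ℝ (closure Q) := by
    subst hQ_eq
    refine uniqueDiffOn_convex (convex_openBox a b).closure ((openBox_nonempty hab).mono ?_)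
    exact interior_maximal subset_closure (isOpen_openBox a b)
  have Finv_diff := (M.Finv_smooth Q hQ).differentiableOn (by simp)
  rw [G.closure_phys (M.mesh_sub Q hQ)] at Finv_diff ⊢
  exact uniqueDiffOn_image_of_leftInvOn closureQ_unique
    ((M.F_smooth Q hQ).differentiableOn (by simp)) Finv_diff
    fun y hy => G.F_leftInv y (closure_mono (M.mesh_sub Q hQ) hy)

lemma pow_diam_phys_le_prod (hQ : Q ∈ M.pMesh) {a b : Fin d → ℝ} (hQ_eq : Q = openBox a b) :
    (Cshape * diam (G.phys Q)) ^ d ≤ (G.biLip : ℝ) ^ d * ∏ i, (b i - a i) := by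
  have shape_pos := M.shape_pos
  calc (Cshape * diam (G.phys Q)) ^ d ≤ (Cshape * (G.biLip * diam Q)) ^ d := by
        gcongr
        exact G.diam_phys_le (M.mesh_sub Q hQ)
    _ = (G.biLip : ℝ) ^ d * ∏ _i : Fin d, Cshape * diam Q := by
        rw [Finset.prod_const, Finset.card_univ, Fintype.card_fin]
        ring
    _ ≤ (G.biLip : ℝ) ^ d * ∏ i, (b i - a i) := by
        gcongr with i
        exact M.shape_reg Q hQ a b hQ_eq i

lemma contDiffOn_closure_phys (hQ : Q ∈ M.pMesh) {v : Euc d → ℝ} (hv : v ∈ M.Vh) :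
    ContDiffOn ℝ 1 v (closure (G.phys Q)) :=
  (M.vh_smooth v hv Q hQ).of_le (by exact_mod_cast le_top)

lemma setIntegral_div_hsz (hQ : Q ∈ M.pMesh) (g : Euc d → ℝ) :
    ∫ x in G.phys Q, g x / M.hsz x = (∫ x in G.phys Q, g x) / diam (G.phys Q) := by
  rw [← integral_div]
  refine setIntegral_congr_fun (M.isOpen_phys hQ).measurableSet fun x hx => ?_
  simp only [M.hsz_eq Q hQ x hx]

lemma setIntegral_dn_sq_le (hQ : Q ∈ M.pMesh) {v : Euc d → ℝ} {B : ℝ}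
    (hB : ∀ x ∈ closure (G.phys Q), ‖gradient v x‖ ^ 2 ≤ B) :
    ∫ x in G.ΓK Q, G.dn v x ^ 2 ∂(sMeas d) ≤ B * (max CΓ 0 * diam (G.phys Q) ^ (d - 1)) := by
  have B_nonneg : 0 ≤ B := by
    obtain ⟨y, hy, -⟩ := M.mesh_active Q hQ
    exact (sq_nonneg _).trans (hB _ (subset_closure (mem_image_of_mem G.F hy)))
  have ΓK_le : sMeas d (G.ΓK Q) ≤ ENNReal.ofReal (max CΓ 0 * diam (G.phys Q) ^ (d - 1)) := by
    refine (M.ΓK_bound Q hQ).trans ?_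
    gcongr
    exact le_max_left _ _
  have dn_sq_le : ∀ x ∈ G.ΓK Q, ‖G.dn v x ^ 2‖ ≤ B := fun x ⟨hxD, hxK⟩ => by
    rw [norm_pow]
    refine le_trans ?_ (hB x hxK)
    gcongr
    exact G.abs_dn_le_norm_gradient v (G.ΓD_sub hxD)
  calc ∫ x in G.ΓK Q, G.dn v x ^ 2 ∂(sMeas d)
      ≤ B * (sMeas d).real (G.ΓK Q) :=
        (Real.le_norm_self _).trans
          (norm_setIntegral_le_of_norm_le_const (ΓK_le.trans_lt ENNReal.ofReal_lt_top) dn_sq_le)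
    _ ≤ B * (max CΓ 0 * diam (G.phys Q) ^ (d - 1)) := by
        gcongr
        exact ENNReal.toReal_le_of_le_ofReal (by positivity) ΓK_le

variable {v f : Euc d → ℝ}

lemma norm_fderiv_le_norm_fderiv_pullback (hQ : Q ∈ M.pMesh) (hf : Differentiable ℝ f)
    (hvf : EqOn (v ∘ G.F) f Q) {x : Euc d} (hx : x ∈ G.phys Q) :
    ‖fderiv ℝ v x‖ ≤ G.biLip * ‖fderiv ℝ f (G.Finv x)‖ := by
  have closure_mem : closure (G.phys Q) ∈ 𝓝 x :=
    Filter.mem_of_superset ((M.isOpen_phys hQ).mem_nhds hx) subset_closure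
  refine norm_fderiv_le_of_eventuallyEq_comp closure_mem (M.Finv_lipschitzOn_closure_phys hQ)
    ((M.Finv_smooth Q hQ).contDiffAt closure_mem |>.differentiableAt (by simp)) (hf _) ?_
  filter_upwards [(M.isOpen_phys hQ).mem_nhds hx]
  rintro _ ⟨y, hy, rfl⟩
  rw [Function.comp_apply, G.F_leftInv y (subset_closure (M.mesh_sub Q hQ hy)), ← hvf hy,
    Function.comp_apply]

lemma norm_fderiv_pullback_le (hQ : Q ∈ M.pMesh) (hv : v ∈ M.Vh)
    (hvf : EqOn (v ∘ G.F) f Q) {y : Euc d} (hy : y ∈ Q) :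
    ‖fderiv ℝ f y‖ ≤ G.biLip * ‖fderiv ℝ v (G.F y)‖ := by
  have Q_mem : Q ∈ 𝓝 y := (M.isOpen_of_mem_pMesh hQ).mem_nhds hy
  have closure_phys_mem : closure (G.phys Q) ∈ 𝓝 (G.F y) :=
    Filter.mem_of_superset ((M.isOpen_phys hQ).mem_nhds (mem_image_of_mem _ hy)) subset_closure
  exact norm_fderiv_le_of_eventuallyEq_comp Q_mem
    (G.F_lip.mono ((M.mesh_sub Q hQ).trans subset_closure))
    ((M.F_smooth Q hQ).contDiffAt (Filter.mem_of_superset Q_mem subset_closure)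
      |>.differentiableAt (by simp))
    ((M.contDiffOn_closure_phys hQ hv).contDiffAt closure_phys_mem
      |>.differentiableAt one_ne_zero)
    (hvf.symm.eventuallyEq_of_mem Q_mem)

lemma setIntegral_norm_fderiv_pullback_sq_le (hQ : Q ∈ M.pMesh) (hv : v ∈ M.Vh)
    (hf : ContDiff ℝ 1 f) (hvf : EqOn (v ∘ G.F) f Q) :
    ∫ y in Q, ‖fderiv ℝ f y‖ ^ 2 ≤
      (G.biLip : ℝ) ^ (d + 2) * ∫ x in G.phys Q, ‖fderiv ℝ v x‖ ^ 2 := by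
  have Finv_lip := M.Finv_lipschitzOn_closure_phys hQ
  have phys_measurable := (M.isOpen_phys hQ).measurableSet
  have fderiv_sq_cont : Continuous fun y => ‖fderiv ℝ f y‖ ^ 2 :=
    (hf.continuous_fderiv one_ne_zero).norm.pow 2
  have comp_integrable :
      IntegrableOn ((fun y => ‖fderiv ℝ f y‖ ^ 2) ∘ G.Finv) (G.phys Q) :=
    ((fderiv_sq_cont.comp_continuousOn Finv_lip.continuousOn).integrableOn_compact
      (M.isCompact_closure_phys hQ)).mono_set subset_closure
  have v_integrable : IntegrableOn (fun x => ‖fderiv ℝ v x‖ ^ 2) (G.phys Q) :=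
    integrableOn_norm_fderiv_sq (M.isOpen_phys hQ) (M.isCompact_closure_phys hQ)
      (M.uniqueDiffOn_closure_phys hQ) (M.contDiffOn_closure_phys hQ hv)
  have pointwise_le (x : Euc d) (hx : x ∈ G.phys Q) :
      ‖fderiv ℝ f (G.Finv x)‖ ^ 2 ≤ (G.biLip : ℝ) ^ 2 * ‖fderiv ℝ v x‖ ^ 2 := by
    obtain ⟨y, hy, rfl⟩ := hx
    rw [G.F_leftInv y (subset_closure (M.mesh_sub Q hQ hy)), ← mul_pow]
    gcongr
    exact M.norm_fderiv_pullback_le hQ hv hvf hy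
  calc ∫ y in Q, ‖fderiv ℝ f y‖ ^ 2
      ≤ (G.biLip : ℝ) ^ d * ∫ x in G.phys Q, ‖fderiv ℝ f (G.Finv x)‖ ^ 2 := by
        simpa only [G.Finv_image_phys (M.mesh_sub Q hQ), finrank_euclideanSpace_fin] using
          setIntegral_image_le_of_lipschitzOn phys_measurable (Finv_lip.mono subset_closure)
            fderiv_sq_cont (fun _ => sq_nonneg _) comp_integrable
    _ ≤ (G.biLip : ℝ) ^ d * ∫ x in G.phys Q, (G.biLip : ℝ) ^ 2 * ‖fderiv ℝ v x‖ ^ 2 := by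
        refine mul_le_mul_of_nonneg_left ?_ (by positivity)
        exact setIntegral_mono_on comp_integrable (v_integrable.const_mul _) phys_measurable
          pointwise_le
    _ = (G.biLip : ℝ) ^ (d + 2) * ∫ x in G.phys Q, ‖fderiv ℝ v x‖ ^ 2 := by
        rw [integral_const_mul, pow_add, mul_assoc]

end Mesh

lemma exists_pow_mul_norm_fderiv_sq_le_of_mem_phys (d p : ℕ) :
    ∃ κ > (0 : ℝ), ∀ {G : Geom d} {θ Cshape Cnb CΓ : ℝ} (M : Mesh d p G θ Cshape Cnb CΓ),
      ∀ Q ∈ M.pMesh, ∀ v ∈ M.Vh, ∀ x ∈ G.phys Q,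
        (Cshape * diam (G.phys Q)) ^ d * ‖fderiv ℝ v x‖ ^ 2 ≤
          κ * (G.biLip : ℝ) ^ (2 * d + 4) * ∫ y in G.phys Q, ‖fderiv ℝ v y‖ ^ 2 := by
  obtain ⟨κ, κ_pos, hκ⟩ := exists_prod_mul_norm_fderiv_sq_le d p
  refine ⟨κ, κ_pos, fun {G} _ Cshape _ _ M Q hQ v hv x hx => ?_⟩
  obtain ⟨a, b, hab, hQ_eq⟩ := M.mesh_boxes Q hQ
  obtain ⟨f, hf, hvf⟩ := M.vh_poly v hv Q hQ
  have prod_nonneg : 0 ≤ ∏ i, (b i - a i) := Finset.prod_nonneg fun i _ => sub_nonneg.2 (hab i).le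
  have hxQ : G.Finv x ∈ Q := ((G.phys_eq_inter_preimage (M.mesh_sub Q hQ)).le hx).2
  have box_bound : (∏ i, (b i - a i)) * ‖fderiv ℝ f (G.Finv x)‖ ^ 2 ≤
      κ * ∫ y in Q, ‖fderiv ℝ f y‖ ^ 2 := by
    subst hQ_eq
    exact hκ a b hab f hf _ hxQ
  set I := ∫ y in G.phys Q, ‖fderiv ℝ v y‖ ^ 2
  calc (Cshape * diam (G.phys Q)) ^ d * ‖fderiv ℝ v x‖ ^ 2
      ≤ ((G.biLip : ℝ) ^ d * ∏ i, (b i - a i)) * (G.biLip * ‖fderiv ℝ f (G.Finv x)‖) ^ 2 := by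
        gcongr
        · exact M.pow_diam_phys_le_prod hQ hQ_eq
        · exact M.norm_fderiv_le_norm_fderiv_pullback hQ
            (hf.contDiff.differentiable one_ne_zero) hvf hx
    _ = (G.biLip : ℝ) ^ (d + 2) * ((∏ i, (b i - a i)) * ‖fderiv ℝ f (G.Finv x)‖ ^ 2) := by ring
    _ ≤ (G.biLip : ℝ) ^ (d + 2) * (κ * ∫ y in Q, ‖fderiv ℝ f y‖ ^ 2) :=
        mul_le_mul_of_nonneg_left box_bound (by positivity)
    _ ≤ (G.biLip : ℝ) ^ (d + 2) * (κ * ((G.biLip : ℝ) ^ (d + 2) * I)) := by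
        gcongr
        exact M.setIntegral_norm_fderiv_pullback_sq_le hQ hv hf.contDiff hvf
    _ = κ * (G.biLip : ℝ) ^ (2 * d + 4) * I := by ring

lemma exists_norm_fderiv_sq_le_of_mem_closure_phys (d p : ℕ) :
    ∃ κ > (0 : ℝ), ∀ {G : Geom d} {θ Cshape Cnb CΓ : ℝ} (M : Mesh d p G θ Cshape Cnb CΓ),
      ∀ Q ∈ M.pMesh, ∀ v ∈ M.Vh, ∀ x ∈ closure (G.phys Q),
        ‖fderiv ℝ v x‖ ^ 2 ≤ κ * (G.biLip : ℝ) ^ (2 * d + 4) *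
          (∫ y in G.phys Q, ‖fderiv ℝ v y‖ ^ 2) / (Cshape * diam (G.phys Q)) ^ d := by
  obtain ⟨κ, κ_pos, hκ⟩ := exists_pow_mul_norm_fderiv_sq_le_of_mem_phys d p
  refine ⟨κ, κ_pos, fun {G} _ Cshape _ _ M Q hQ v hv x hx => ?_⟩
  have scale_pos : 0 < Cshape * diam (G.phys Q) := mul_pos M.shape_pos (M.diam_phys_pos hQ)
  refine (Real.le_sqrt (norm_nonneg _) (by positivity)).1 ?_
  refine norm_fderiv_le_of_mem_closure (M.isOpen_phys hQ) (M.uniqueDiffOn_closure_phys hQ)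
    (M.contDiffOn_closure_phys hQ hv) (fun y hy => ?_) hx
  refine Real.le_sqrt_of_sq_le ((le_div_iff₀' (by positivity)).2 ?_)
  exact hκ M Q hQ v hv y hy

lemma exists_setIntegral_dn_sq_le (d p : ℕ) :
    ∃ κ > (0 : ℝ), ∀ {G : Geom d} {θ Cshape Cnb CΓ : ℝ} (M : Mesh d p G θ Cshape Cnb CΓ),
      ∀ Q ∈ M.pMesh, ∀ v ∈ M.Vh,
        ∫ x in G.ΓK Q, G.dn v x ^ 2 ∂(sMeas d) ≤
          κ * (G.biLip : ℝ) ^ (2 * d + 4) * max CΓ 0 / Cshape ^ d *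
            ∫ x in G.phys Q, ‖gradient v x‖ ^ 2 / M.hsz x := by
  obtain ⟨κ, κ_pos, hκ⟩ := exists_norm_fderiv_sq_le_of_mem_closure_phys d p
  refine ⟨κ, κ_pos, fun {G} _ Cshape _ CΓ M Q hQ v hv => ?_⟩
  have shape_pos := M.shape_pos
  have diam_pos := M.diam_phys_pos hQ
  simp only [← norm_gradient_eq_norm_fderiv] at hκ
  rw [M.setIntegral_div_hsz hQ]
  set h := diam (G.phys Q)
  set I := ∫ x in G.phys Q, ‖gradient v x‖ ^ 2
  have pow_h : h ^ d = h ^ (d - 1) * h := (pow_sub_one_mul (M.dim_ne_zero hQ) h).symm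
  calc ∫ x in G.ΓK Q, G.dn v x ^ 2 ∂(sMeas d)
      ≤ κ * (G.biLip : ℝ) ^ (2 * d + 4) * I / (Cshape * h) ^ d * (max CΓ 0 * h ^ (d - 1)) :=
        M.setIntegral_dn_sq_le hQ (hκ M Q hQ v hv)
    _ = κ * (G.biLip : ℝ) ^ (2 * d + 4) * max CΓ 0 / Cshape ^ d * (I / h) := by
        rw [mul_pow, pow_h]
        field_simp

theorem normal_derivative_trace_inequality_general (d p : ℕ) (L : ℝ≥0) (Cshape CΓ : ℝ) :
    ∃ C > (0 : ℝ), ∀ G : Geom d, G.biLip ≤ L → ∀ {θ Cnb : ℝ} (M : Mesh d p G θ Cshape Cnb CΓ),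
      ∀ Q ∈ M.pMesh, ∀ v ∈ M.Vh,
        √(∫ x in G.ΓK Q, G.dn v x ^ 2 ∂(sMeas d)) ≤
          C * √(∫ x in G.phys Q, ‖gradient v x‖ ^ 2 / M.hsz x) := by
  obtain ⟨κ, κ_pos, hκ⟩ := exists_setIntegral_dn_sq_le d p
  let D : ℝ := κ * (L : ℝ) ^ (2 * d + 4) * max CΓ 0 / Cshape ^ d
  refine ⟨√D + 1, by positivity, fun G hL θ Cnb M Q hQ v hv => ?_⟩
  have shape_pos := M.shape_pos
  set J := ∫ x in G.phys Q, ‖gradient v x‖ ^ 2 / M.hsz x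
  have J_nonneg : 0 ≤ J := integral_nonneg fun x => div_nonneg (sq_nonneg _) (M.hsz_pos x).le
  calc √(∫ x in G.ΓK Q, G.dn v x ^ 2 ∂(sMeas d)) ≤ √(D * J) := by
        refine Real.sqrt_le_sqrt ((hκ M Q hQ v hv).trans ?_)
        dsimp only [D]
        gcongr
    _ = √D * √J := Real.sqrt_mul (by positivity) _
    _ ≤ (√D + 1) * √J := by gcongr; exact le_add_of_nonneg_right zero_le_one

noncomputable section

/-- Corollary A.2.  There exists `C > 0`, depending on `Γ_D`
but independent of how the mesh intersects the boundary, such that for every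
element `K ∈ M_{0,h}` and every `v_h ∈ Ṽ_h`,
`‖∂v_h/∂n‖_{L²(Γ_K)} ≤ C ‖h^{-1/2} ∇v_h‖_{L²(K)}`, where `Γ_K = Γ_D ∩ cl(K)`.
The spline space satisfies the standard inverse inequality
`‖D²v_h‖_{L²(K)} ≤ C_inv ‖h⁻¹ ∇v_h‖_{L²(K)}` (a consequence of shape
regularity of the untrimmed mesh), stated here as a hypothesis with an
explicit constant. -/
theorem normal_derivative_trace_inequality
    {d p : ℕ} {θ Cshape Cnb CΓ : ℝ} (G : Geom d) {ι : Type}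
    (M : ι → Mesh d p G θ Cshape Cnb CΓ)
    (Cinv : ℝ) (hCinv : 0 < Cinv)
    (hinv : ∀ i, ∀ Q ∈ (M i).pMesh, ∀ v ∈ (M i).Vh,
      Real.sqrt (∫ x in G.phys Q, ‖iteratedFDeriv ℝ 2 v x‖ ^ 2)
        ≤ Cinv * Real.sqrt (∫ x in G.phys Q, ‖gradient v x‖ ^ 2 / (M i).hsz x ^ 2)) :
    ∃ C > (0 : ℝ), ∀ i, ∀ Q ∈ (M i).pMesh, ∀ v ∈ (M i).Vh,
      Real.sqrt (∫ x in G.ΓK Q, G.dn v x ^ 2 ∂(sMeas d))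
        ≤ C * Real.sqrt (∫ x in G.phys Q, ‖gradient v x‖ ^ 2 / (M i).hsz x) := by
  obtain ⟨C, C_pos, hC⟩ := normal_derivative_trace_inequality_general d p G.biLip Cshape CΓ
  exact ⟨C, C_pos, fun i => hC G le_rfl (M i)⟩

end
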